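/- arXiv:1310.5519 — 2 statements merged into one kernel-verified Lean document; each statement's English description precedes it below -/
import Mathlib

section
/- Every perfect subset of 2^ω contains a skew perfect subset. -/
/-!
Choose points `x 0, x 1, …` of `T` one at a time: `x (n+1) ≠ x (p n)` lies in `T` and agrees with
an earlier point `x (p n)`, `p n ≤ n`, beyond the level `L n` of the previous splitting; its own
splitting level from `x (p n)` is `L (n+1) > L n`. Here `p n = (Nat.unpair n).1`, so that every
index is a value of `p` infinitely often. The set `P` is the closure of the range of `x`.

* `P` is perfect, since each `x m` is the limit of those `x (n+1)` with `p n = m`.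
* Adding `x (n+1)` to `x 0, …, x n` creates exactly one new splitting node, at the new level
  `L (n+1)`: towards the points other than `x (p n)`, the new point splits exactly where `x (p n)`
  does. Hence every splitting node of the range is `x (m+1) ↾ L (m+1)` for some `m`
  (`exists_node`). The same is true of the closure (`exists_node_closure`), as splitting nodes
  depend on finitely many coordinates only. Since `L` is strictly increasing, the level of a
  splitting node determines `m` and hence the node.
-/


open Set

/-- The Cantor space `2^ω`. -/
abbrev Cantor : Type := ℕ → Bool

/-- The first coordinate where `x` and `y` differ (`0` if `x = y`). -/
noncomputable def splitLevel (x y : Cantor) : ℕ :=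
  letI := Classical.dec (x = y)
  if h : x = y then 0 else Nat.find (Function.ne_iff.mp h)

/-- The metric `d(x,y) = 1/(k+1)`, `k = min{m : x m ≠ y m}`. -/
noncomputable def cdist (x y : Cantor) : ℝ := 1 / (splitLevel x y + 1)

/-- The lexicographic order on `2^ω` induced by `0 < 1`. -/
def clex (x y : Cantor) : Prop := x ≠ y ∧ x (splitLevel x y) = false

/-- The initial segment `x ↾ k` as an element of `2^{<ω}`. -/
def restr (x : Cantor) (k : ℕ) : List Bool := (List.range k).map x

/-- The longest common initial segment `x ∩ y`. -/
noncomputable def meet (x y : Cantor) : List Bool := restr x (splitLevel x y)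

/-- A perfect subset of `2^ω`: nonempty, closed, with no isolated points. -/
def PerfectSet (P : Set Cantor) : Prop := Perfect P ∧ P.Nonempty

/-- A skew subset of `2^ω`. -/
def Skew (P : Set Cantor) : Prop :=
  ∀ x₀ ∈ P, ∀ x₁ ∈ P, ∀ y₀ ∈ P, ∀ y₁ ∈ P, x₀ ≠ x₁ → y₀ ≠ y₁ →
    cdist x₀ x₁ = cdist y₀ y₁ → meet x₀ x₁ = meet y₀ y₁

/-- Index `i - 1` of the `i`-th gap (for `i ∈ {1,…,n-1}`, reindexed by `Fin (n-1)`). -/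
def gapIdx {n : ℕ} (i : Fin (n - 1)) : Fin n := ⟨i.1, by have := i.2; omega⟩

/-- Index `i` of the `i`-th gap. -/
def gapIdx' {n : ℕ} (i : Fin (n - 1)) : Fin n := ⟨i.1 + 1, by have := i.2; omega⟩

/-- `|x_{i-1} ∩ x_i|` for the `i`-th gap of the tuple `X`. -/
noncomputable def gapLen {n : ℕ} (X : Fin n → Cantor) (i : Fin (n - 1)) : ℕ :=
  splitLevel (X (gapIdx i)) (X (gapIdx' i))

/-- `x_{i-1} ∩ x_i` for the `i`-th gap of the tuple `X`. -/
noncomputable def gapMeet {n : ℕ} (X : Fin n → Cantor) (i : Fin (n - 1)) : List Bool :=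
  meet (X (gapIdx i)) (X (gapIdx' i))

/-- `[T]^n` : lexicographically increasing `n`-tuples of elements of `T`. -/
def Tuples (n : ℕ) (T : Set Cantor) : Set (Fin n → Cantor) :=
  {X | (∀ i, X i ∈ T) ∧ ∀ i j : Fin n, i < j → clex (X i) (X j)}

/-- `[T]^n_⪯` : members of `[T]^n` whose gap distances realize the total order `⪯`
(on `{1,…,n-1}`, reindexed by `Fin (n-1)`):
`d(x_{i-1},x_i) > d(x_{j-1},x_j)` iff `i ⪯ j`, for `i ≠ j`. -/
def OrdTuples (n : ℕ) (prec : Fin (n - 1) → Fin (n - 1) → Prop) (T : Set Cantor) :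
    Set (Fin n → Cantor) :=
  {X | X ∈ Tuples n T ∧ ∀ i j : Fin (n - 1), i ≠ j →
      (cdist (X (gapIdx i)) (X (gapIdx' i)) > cdist (X (gapIdx j)) (X (gapIdx' j)) ↔ prec i j)}

/-- `D(X) = {x_{i-1} ∩ x_i : i ∈ {1,…,n-1}}`. -/
def Dset (n : ℕ) (X : Fin n → Cantor) : Set (List Bool) :=
  {t | ∃ i : Fin (n - 1), t = gapMeet X i}

/-- `D̂(X) = D(X) ∪ {x_i ↾ |x_{j-1} ∩ x_j| : i ≠ j}`. -/
def Dhat (n : ℕ) (X : Fin n → Cantor) : Set (List Bool) :=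
  Dset n X ∪ {t | ∃ (i : Fin n) (j : Fin (n - 1)), (i : ℕ) ≠ (j : ℕ) + 1 ∧
    t = restr (X i) (gapLen X j)}

/-- The abstract index set for the nodes of `D̂(X)`; it serves as the fixed
representative `C^n_⪯` of the isomorphism class of the trees `D̂(X)`,
`X ∈ [2^ω]^n_⪯`, the isomorphism `g_X : D̂(X) → C^n_⪯` being the indexing. -/
abbrev CIdx (n : ℕ) : Type := Fin (n - 1) ⊕ Fin n × Fin (n - 1)

/-- The node of `D̂(X)` indexed by a given element of `C^n_⪯`: `inl j` indexes
`x_{j-1} ∩ x_j` and `inr (i, j)` indexes `x_i ↾ |x_{j-1} ∩ x_j|`. -/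
noncomputable def nodeOf {n : ℕ} (X : Fin n → Cantor) : CIdx n → List Bool
  | .inl j => gapMeet X j
  | .inr (i, j) => restr (X i) (gapLen X j)

/-- `D̂(X):J = {x ↾ k : g_X(x ↾ k) ∈ J}` for `J ⊆ C^n_⪯`. -/
noncomputable def DhatSel {n : ℕ} (X : Fin n → Cantor) (J : Set (CIdx n)) : Set (List Bool) :=
  nodeOf X '' J

/-- A map is Baire measurable if preimages of open sets have the Baire property. -/
def BaireMeasurableFun {α β : Type*} [TopologicalSpace α] [TopologicalSpace β]
    (f : α → β) : Prop :=
  ∀ U : Set β, IsOpen U → BaireMeasurableSet (f ⁻¹' U)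

/-- `x` and `y` agree below `k` and differ at `k`, i.e. `x ≠ y` and `splitLevel x y = k`. -/
def Splits (x y : Cantor) (k : ℕ) : Prop := (∀ i < k, x i = y i) ∧ x k ≠ y k

lemma splits_splitLevel {x y : Cantor} (h : x ≠ y) : Splits x y (splitLevel x y) := by
  classical
  unfold splitLevel
  rw [dif_neg h]
  refine ⟨fun i hi => ?_, Nat.find_spec (Function.ne_iff.mp h)⟩
  simpa using Nat.find_min _ hi

lemma Splits.unique {x y : Cantor} {k l : ℕ} (hk : Splits x y k) (hl : Splits x y l) : k = l := by
  rcases lt_trichotomy k l with h | h | h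
  · exact absurd (hl.1 k h) hk.2
  · exact h
  · exact absurd (hk.1 l h) hl.2

lemma Splits.splitLevel_eq {x y : Cantor} {k : ℕ} (h : Splits x y k) : splitLevel x y = k :=
  (splits_splitLevel (fun e => h.2 (by rw [e]))).unique h

lemma splitLevel_eq_of_cdist_eq {x₀ x₁ y₀ y₁ : Cantor} (h : cdist x₀ x₁ = cdist y₀ y₁) :
    splitLevel x₀ x₁ = splitLevel y₀ y₁ := by
  unfold cdist at h
  rw [one_div, one_div, inv_inj] at h
  exact_mod_cast add_right_cancel h

lemma restr_congr {x y : Cantor} {k : ℕ} (h : ∀ i < k, x i = y i) : restr x k = restr y k := by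
  unfold restr
  exact List.map_congr_left fun i hi => h i (List.mem_range.mp hi)

/-- In a perfect set, each point is approximated by a distinct one to any prescribed depth. -/
lemma exists_splits_of_perfect {T : Set Cantor} (hT : Perfect T) (x : T) (l : ℕ) :
    ∃ q : T × ℕ, l < q.2 ∧ Splits x q.1 q.2 := by
  obtain ⟨y, ⟨hyU, hyT⟩, hne⟩ := accPt_iff_nhds.mp (hT.acc x x.2) _
    ((PiNat.isOpen_cylinder _ (x : Cantor) (l + 1)).mem_nhds (PiNat.self_mem_cylinder _ _))
  have hs := splits_splitLevel (Ne.symm hne)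
  refine ⟨(⟨y, hyT⟩, splitLevel x y), ?_, hs⟩
  by_contra hlt
  exact hs.2 (hyU _ (by simp only at hlt; omega)).symm

/-- The recursive construction: given a choice `f` of a point splitting from a given point beyond a
given level, together with its splitting level, the pairs `(x n, L n)` described above. -/
def buildSeq {T : Set Cantor} (x₀ : T) (f : T → ℕ → T × ℕ) : ℕ → T × ℕ
  | 0 => (x₀, 0)
  | n + 1 => f (buildSeq x₀ f (Nat.unpair n).1).1 (buildSeq x₀ f n).2
decreasing_by
  · exact Nat.lt_succ_of_le (Nat.unpair_left_le n)
  · exact Nat.lt_succ_self n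

lemma exists_seq {T : Set Cantor} (hT : PerfectSet T) :
    ∃ (x : ℕ → Cantor) (L : ℕ → ℕ), (∀ n, x n ∈ T) ∧ (∀ n, L n < L (n + 1)) ∧
      ∀ n, Splits (x (Nat.unpair n).1) (x (n + 1)) (L (n + 1)) := by
  obtain ⟨x₀, hx₀⟩ := hT.2
  choose f hf using exists_splits_of_perfect hT.1
  refine ⟨fun n => (buildSeq ⟨x₀, hx₀⟩ f n).1, fun n => (buildSeq ⟨x₀, hx₀⟩ f n).2,
    fun n => Subtype.coe_prop _, fun n => ?_, fun n => ?_⟩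
  · simp only [buildSeq.eq_2]
    exact (hf _ _).1
  · simp only [buildSeq.eq_2]
    exact (hf _ _).2

section

variable {x : ℕ → Cantor} {L : ℕ → ℕ}

/-- Every splitting node of the range of `x` is one of the nodes `x (m+1) ↾ L (m+1)`. The bound
`m < j` says that the node was created no later than the point `x j`. -/
lemma exists_node (hL : StrictMono L)
    (hx : ∀ n, Splits (x (Nat.unpair n).1) (x (n + 1)) (L (n + 1))) (j : ℕ) :
    ∀ i < j, ∃ m < j, Splits (x i) (x j) (L (m + 1)) ∧ ∀ k < L (m + 1), x i k = x (m + 1) k := by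
  induction j using Nat.strong_induction_on with
  | _ j ih =>
    intro i hij
    obtain _ | n := j
    · omega
    have hp := Nat.unpair_left_le n
    have hxn := hx n
    generalize (Nat.unpair n).1 = p at hp hxn
    by_cases hip : i = p
    · subst hip
      exact ⟨n, n.lt_succ_self, hxn, hxn.1⟩
    -- The node at which `x i` and `x p` split is an old one.
    obtain ⟨m, hm, hs, hnode⟩ : ∃ m < n, Splits (x i) (x p) (L (m + 1)) ∧
        ∀ k < L (m + 1), x i k = x (m + 1) k := by
      rcases lt_or_gt_of_ne hip with h | h
      · obtain ⟨m, hm, hs, hnode⟩ := ih p (by omega) i h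
        exact ⟨m, by omega, hs, hnode⟩
      · obtain ⟨m, hm, hs, hnode⟩ := ih i hij p h
        exact ⟨m, by omega, ⟨fun k hk => (hs.1 k hk).symm, hs.2.symm⟩,
          fun k hk => (hs.1 k hk).symm.trans (hnode k hk)⟩
    -- It lies below level `L (n+1)`, so `x (n+1)` splits from `x i` where `x p` does.
    have hlt : L (m + 1) < L (n + 1) := hL (by omega)
    refine ⟨m, by omega, ⟨fun k hk => ?_, ?_⟩, hnode⟩
    · rw [hs.1 k hk, hxn.1 k (hk.trans hlt)]
    · rw [← hxn.1 _ hlt]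
      exact hs.2

/-- Points of the closure split at the same nodes as points of the range. -/
lemma exists_node_closure (hL : StrictMono L)
    (hx : ∀ n, Splits (x (Nat.unpair n).1) (x (n + 1)) (L (n + 1))) {a b : Cantor}
    (ha : a ∈ closure (range x)) (hb : b ∈ closure (range x)) (hab : a ≠ b) :
    ∃ m, Splits a b (L (m + 1)) ∧ ∀ k < L (m + 1), a k = x (m + 1) k := by
  have approx : ∀ c ∈ closure (range x), ∀ N, ∃ i, ∀ k < N, x i k = c k := by
    intro c hc N
    obtain ⟨_, hw, i, rfl⟩ := mem_closure_iff.mp hc _ (PiNat.isOpen_cylinder _ c N)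
      (PiNat.self_mem_cylinder _ _)
    exact ⟨i, hw⟩
  have hs := splits_splitLevel hab
  generalize splitLevel a b = l at hs
  obtain ⟨i, hi⟩ := approx a ha (l + 1)
  obtain ⟨j, hj⟩ := approx b hb (l + 1)
  have hs' : Splits (x i) (x j) l :=
    ⟨fun k hk => by rw [hi k (by omega), hj k (by omega), hs.1 k hk],
      by rw [hi l (by omega), hj l (by omega)]; exact hs.2⟩
  obtain ⟨m, hm, hnode⟩ : ∃ m, l = L (m + 1) ∧ ∀ k < l, x i k = x (m + 1) k := by
    rcases lt_trichotomy i j with h | h | h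
    · obtain ⟨m, -, hm, hnode⟩ := exists_node hL hx j i h
      obtain rfl := hs'.unique hm
      exact ⟨m, rfl, hnode⟩
    · exact absurd (by rw [h]) hs'.2
    · obtain ⟨m, -, hm, hnode⟩ := exists_node hL hx i j h
      obtain rfl := hs'.unique ⟨fun k hk => (hm.1 k hk).symm, hm.2.symm⟩
      exact ⟨m, rfl, fun k hk => (hm.1 k hk).symm.trans (hnode k hk)⟩
  subst hm
  exact ⟨m, hs, fun k hk => by rw [← hi k (by omega), hnode k hk]⟩

lemma skew_closure (hL : StrictMono L)
    (hx : ∀ n, Splits (x (Nat.unpair n).1) (x (n + 1)) (L (n + 1))) :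
    Skew (closure (range x)) := by
  intro a ha b hb c hc d hd hab hcd h
  obtain ⟨m, hm, hma⟩ := exists_node_closure hL hx ha hb hab
  obtain ⟨n, hn, hnc⟩ := exists_node_closure hL hx hc hd hcd
  have hlev := splitLevel_eq_of_cdist_eq h
  rw [hm.splitLevel_eq, hn.splitLevel_eq] at hlev
  obtain rfl : m = n := Nat.succ_injective (hL.injective hlev)
  unfold meet
  rw [hm.splitLevel_eq, hn.splitLevel_eq]
  exact restr_congr fun k hk => (hma k hk).trans (hnc k hk).symm

lemma preperfect_range (hL : StrictMono L)
    (hx : ∀ n, Splits (x (Nat.unpair n).1) (x (n + 1)) (L (n + 1))) :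
    Preperfect (range x) := by
  rintro _ ⟨m, rfl⟩
  rw [accPt_iff_nhds]
  intro U hU
  obtain ⟨_, ⟨z, N, rfl⟩, hz, hzU⟩ :=
    (PiNat.isTopologicalBasis_cylinders (fun _ => Bool)).mem_nhds_iff.mp hU
  -- The stage `n = pair m N ≥ N` adds a point agreeing with `x m` below `L (n+1) ≥ N`.
  have hs := hx (Nat.pair m N)
  rw [Nat.unpair_pair] at hs
  have hN : N ≤ L (Nat.pair m N + 1) :=
    (Nat.right_le_pair m N).trans ((Nat.le_succ _).trans (hL.le_apply))
  refine ⟨x (Nat.pair m N + 1), ⟨hzU fun k hk => ?_, mem_range_self _⟩, fun e => hs.2 (by rw [e])⟩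
  rw [← hs.1 k (by omega)]
  exact hz k hk

end

/-- Every perfect subset of `2^ω` contains a skew perfect subset. -/
theorem perfect_contains_skew_perfect (T : Set Cantor) (hT : PerfectSet T) :
    ∃ P : Set Cantor, P ⊆ T ∧ PerfectSet P ∧ Skew P := by
  obtain ⟨x, L, hxT, hlt, hx⟩ := exists_seq hT
  have hL : StrictMono L := strictMono_nat_of_lt_succ hlt
  exact ⟨closure (range x), closure_minimal (range_subset_iff.mpr hxT) hT.1.closed,
    ⟨(preperfect_range hL hx).perfect_closure, (range_nonempty x).closure⟩, skew_closure hL hx⟩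
end

section
/- For any n ∈ ω, any total order ⪯ on {1,...,n-1}, and any two tuples X = (x_0,...,x_{n-1}) and Y = (y_0,...,y_{n-1}) in [2^ω]^n_⪯, the finite rooted subtrees of the binary tree 2^{<ω} determined by D̂(X) and D̂(Y) are isomorphic; an isomorphism g : D̂(X) → D̂(Y) is given by g(x_{i-1} ∩ x_i) = y_{i-1} ∩ y_i and g(x_i ↾ |x_{j-1} ∩ x_j|) = y_i ↾ |y_{j-1} ∩ y_j|. -/
/-!
Since `x_{j-1}` and `x_j` agree below the level `|x_{j-1} ∩ x_j|`, every node of `D̂(X)` has the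
form `x_i ↾ |x_{j-1} ∩ x_j|`, and conversely every such restriction, for arbitrary `i` and `j`, is
a node (`Dhat_eq_range`). So it suffices to see that whether one such restriction is an initial
segment of another depends only on `⪯` and the indices: the assignment of the nodes of `D̂(Y)` to
those of `D̂(X)` with the same indices is then well defined, bijective and order preserving
(`exists_iso_of_prefix_iff`).

Now `x_i ↾ |x_{j-1} ∩ x_j|` is an initial segment of `x_{i'} ↾ |x_{j'-1} ∩ x_{j'}|` iff
`|x_{j-1} ∩ x_j| ≤ |x_{j'-1} ∩ x_{j'}|` and `x_i`, `x_{i'}` agree below `|x_{j-1} ∩ x_j|`. As the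
tuple is lexicographically increasing, the elements between `x_i` and `x_{i'}` agree with both of
them as far as these agree with each other, so the second condition says that
`|x_{j-1} ∩ x_j| ≤ |x_{k-1} ∩ x_k|` for all gaps `k` between `i` and `i'` (`agree_iff`).
Comparisons between gap levels are prescribed by `⪯` (`gapLen_le_iff`).
-/

open Set

lemma splitLevel_spec {x y : Cantor} (h : x ≠ y) :
    x (splitLevel x y) ≠ y (splitLevel x y) := by
  classical
  unfold splitLevel
  rw [dif_neg h]
  exact Nat.find_spec (Function.ne_iff.mp h)

lemma eq_of_lt_splitLevel {x y : Cantor} {m : ℕ} (hm : m < splitLevel x y) : x m = y m := by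
  classical
  unfold splitLevel at hm
  split_ifs at hm with h
  · rw [h]
  · by_contra hne
    exact Nat.find_min (Function.ne_iff.mp h) hm hne

lemma le_splitLevel_iff {x y : Cantor} (h : x ≠ y) (L : ℕ) :
    L ≤ splitLevel x y ↔ ∀ m < L, x m = y m := by
  constructor
  · intro hL m hm
    exact eq_of_lt_splitLevel (by omega)
  · intro hL
    by_contra! hlt
    exact splitLevel_spec h (hL _ hlt)

lemma restr_prefix_iff (x y : Cantor) (a b : ℕ) :
    restr x a <+: restr y b ↔ a ≤ b ∧ ∀ m < a, x m = y m := by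
  rw [List.prefix_iff_getElem]
  simp [restr]

/-- Intervals of the lexicographic order are convex for agreement below a level. -/
lemma agree_of_clex {x y z : Cantor} (hxy : clex x y) (hyz : clex y z) {L : ℕ}
    (hxz : ∀ m < L, x m = z m) : ∀ m < L, x m = y m := by
  rw [← le_splitLevel_iff hxy.1]
  by_contra! hlt
  have h1 := splitLevel_spec hxy.1
  have h2 := splitLevel_spec hyz.1
  have hz := hxz _ hlt
  -- The level where `y` and `z` split is compared with the one where `x` and `y` split.
  rcases lt_trichotomy (splitLevel y z) (splitLevel x y) with h | h | h
  · exact h2 ((eq_of_lt_splitLevel h).symm.trans (hxz _ (h.trans hlt)))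
  · have := hyz.2
    rw [h] at this
    exact h1 (hxy.2.trans this.symm)
  · exact h1 (hz.trans (eq_of_lt_splitLevel h).symm)

lemma agree_iff_of_le {n : ℕ} {X : Fin n → Cantor} (hX : ∀ i j : Fin n, i < j → clex (X i) (X j))
    (L a d : ℕ) (had : a + d < n) :
    (∀ m < L, X ⟨a, by omega⟩ m = X ⟨a + d, had⟩ m) ↔
      ∀ k : Fin (n - 1), a ≤ k.1 → k.1 < a + d → L ≤ gapLen X k := by
  induction d with
  | zero => simp; intros; omega
  | succ d ih =>
    have ih := ih (by omega)
    have hgap : L ≤ gapLen X ⟨a + d, by omega⟩ ↔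
        ∀ m < L, X ⟨a + d, by omega⟩ m = X ⟨a + d + 1, had⟩ m :=
      le_splitLevel_iff (hX ⟨a + d, by omega⟩ ⟨a + d + 1, had⟩ (by simp [Fin.lt_def])).1 L
    constructor
    · intro h
      have h1 : ∀ m < L, X ⟨a, by omega⟩ m = X ⟨a + d, by omega⟩ m := by
        rcases Nat.eq_zero_or_pos d with rfl | hd
        · intro m _; rfl
        · exact agree_of_clex (hX _ _ (by simp [Fin.lt_def]; omega))
            (hX ⟨a + d, by omega⟩ ⟨a + d + 1, had⟩ (by simp [Fin.lt_def])) h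
      intro k hk1 hk2
      rcases Nat.lt_or_ge k.1 (a + d) with hk | hk
      · exact ih.1 h1 k hk1 hk
      · have hk : k = ⟨a + d, by omega⟩ := Fin.ext (by simp; omega)
        rw [hk]
        exact hgap.2 fun m hm => (h1 m hm).symm.trans (h m hm)
    · intro h m hm
      exact (ih.2 (fun k hk1 hk2 => h k hk1 (by omega)) m hm).trans
        (hgap.1 (h ⟨a + d, by omega⟩ (by simp) (by simp)) m hm)

/-- `x_i` and `x_{i'}` agree below `L` iff all gaps between them have level at least `L`. -/
lemma agree_iff {n : ℕ} {X : Fin n → Cantor} (hX : ∀ i j : Fin n, i < j → clex (X i) (X j))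
    (L : ℕ) (i i' : Fin n) :
    (∀ m < L, X i m = X i' m) ↔
      ∀ k : Fin (n - 1), (i.1 ≤ k.1 ∧ k.1 < i'.1) ∨ (i'.1 ≤ k.1 ∧ k.1 < i.1) →
        L ≤ gapLen X k := by
  obtain ⟨a, ha⟩ := i
  obtain ⟨b, hb⟩ := i'
  rcases Nat.le_total a b with h | h
  · obtain ⟨d, rfl⟩ := Nat.exists_eq_add_of_le h
    rw [agree_iff_of_le hX L a d hb]
    exact ⟨fun H k hk => H k (by grind) (by grind), fun H k h1 h2 => H k (Or.inl ⟨h1, h2⟩)⟩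
  · obtain ⟨d, rfl⟩ := Nat.exists_eq_add_of_le h
    rw [forall₂_congr fun m _ => eq_comm, agree_iff_of_le hX L b d ha]
    exact ⟨fun H k hk => H k (by grind) (by grind), fun H k h1 h2 => H k (Or.inr ⟨h1, h2⟩)⟩

lemma gapLen_le_iff {n : ℕ} {prec : Fin (n - 1) → Fin (n - 1) → Prop} {X : Fin n → Cantor}
    {T : Set Cantor} (hX : X ∈ OrdTuples n prec T) (j k : Fin (n - 1)) :
    gapLen X j ≤ gapLen X k ↔ j = k ∨ ¬ prec k j := by
  by_cases h : j = k
  · simp [h]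
  · rw [← hX.2 k j (Ne.symm h)]
    simp only [h, false_or, cdist, gt_iff_lt, not_lt]
    rw [one_div_le_one_div (by positivity) (by positivity)]
    simp [gapLen]

/-- The initial segment relation between nodes, expressed by `⪯` and the indices alone. -/
lemma node_prefix_iff {n : ℕ} {prec : Fin (n - 1) → Fin (n - 1) → Prop} {X : Fin n → Cantor}
    {T : Set Cantor} (hX : X ∈ OrdTuples n prec T) (i i' : Fin n) (j j' : Fin (n - 1)) :
    restr (X i) (gapLen X j) <+: restr (X i') (gapLen X j') ↔
      (j = j' ∨ ¬ prec j' j) ∧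
      ∀ k : Fin (n - 1), (i.1 ≤ k.1 ∧ k.1 < i'.1) ∨ (i'.1 ≤ k.1 ∧ k.1 < i.1) →
        (j = k ∨ ¬ prec k j) := by
  rw [restr_prefix_iff, agree_iff hX.1.2]
  simp only [gapLen_le_iff hX]

lemma gapMeet_eq_restr {n : ℕ} (X : Fin n → Cantor) (j : Fin (n - 1)) :
    gapMeet X j = restr (X (gapIdx' j)) (gapLen X j) := by
  apply List.map_congr_left
  intro m hm
  exact eq_of_lt_splitLevel (List.mem_range.1 hm)

lemma Dhat_eq_range {n : ℕ} (X : Fin n → Cantor) :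
    Dhat n X = range fun p : Fin n × Fin (n - 1) => restr (X p.1) (gapLen X p.2) := by
  ext t
  constructor
  · rintro (⟨j, rfl⟩ | ⟨i, j, -, rfl⟩)
    · exact ⟨(gapIdx' j, j), (gapMeet_eq_restr X j).symm⟩
    · exact ⟨(i, j), rfl⟩
  · rintro ⟨⟨i, j⟩, rfl⟩
    by_cases h : (i : ℕ) = j + 1
    · left
      obtain rfl : i = gapIdx' j := Fin.ext h
      exact ⟨j, (gapMeet_eq_restr X j).symm⟩
    · exact Or.inr ⟨i, j, h, rfl⟩

/-- Two families of lists with the same initial segment relations between their indices have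
isomorphic ranges, via the index-preserving map. -/
lemma exists_iso_of_prefix_iff {I : Type*} (a b : I → List Bool)
    (hab : ∀ p q, a p <+: a q ↔ b p <+: b q) :
    ∃ g : List Bool → List Bool, (∀ p, g (a p) = b p) ∧ BijOn g (range a) (range b) ∧
      ∀ s ∈ range a, ∀ t ∈ range a, (s <+: t ↔ g s <+: g t) := by
  have heq : ∀ p q, a p = a q ↔ b p = b q := by
    have antisymm_iff : ∀ s t : List Bool, s = t ↔ s <+: t ∧ t <+: s := fun s t =>
      ⟨by rintro rfl; simp, fun h => h.1.eq_of_length_le h.2.length_le⟩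
    intro p q
    rw [antisymm_iff, hab, hab, ← antisymm_iff]
  have hg : ∀ p, Function.extend a b (fun _ => []) (a p) = b p := fun p =>
    Function.FactorsThrough.extend_apply (fun p q h => (heq p q).1 h) _ p
  refine ⟨Function.extend a b fun _ => [], hg, ⟨?_, ?_, ?_⟩, ?_⟩
  · rintro _ ⟨p, rfl⟩
    exact ⟨p, (hg p).symm⟩
  · rintro _ ⟨p, rfl⟩ _ ⟨q, rfl⟩ h
    rw [hg, hg] at h
    exact (heq p q).2 h
  · rintro _ ⟨p, rfl⟩
    exact ⟨a p, ⟨p, rfl⟩, hg p⟩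
  · rintro _ ⟨p, rfl⟩ _ ⟨q, rfl⟩
    rw [hg, hg, hab]

/-- For any `n`, any total order `⪯` on `{1,…,n-1}` and any `X, Y ∈ [2^ω]^n_⪯`, the rooted
subtrees of `2^{<ω}` determined by `D̂(X)` and `D̂(Y)` are isomorphic, an isomorphism
`g` being given by `g(x_{i-1} ∩ x_i) = y_{i-1} ∩ y_i` and
`g(x_i ↾ |x_{j-1} ∩ x_j|) = y_i ↾ |y_{j-1} ∩ y_j|`. -/
theorem dhat_trees_isomorphic (n : ℕ) (prec : Fin (n - 1) → Fin (n - 1) → Prop)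
    (hprec : IsLinearOrder (Fin (n - 1)) prec)
    (X Y : Fin n → Cantor) (hX : X ∈ OrdTuples n prec Set.univ)
    (hY : Y ∈ OrdTuples n prec Set.univ) :
    ∃ g : List Bool → List Bool,
      Set.BijOn g (Dhat n X) (Dhat n Y) ∧
      (∀ s ∈ Dhat n X, ∀ t ∈ Dhat n X, (s <+: t ↔ g s <+: g t)) ∧
      (∀ i : Fin (n - 1), g (gapMeet X i) = gapMeet Y i) ∧
      (∀ (i : Fin n) (j : Fin (n - 1)), (i : ℕ) ≠ (j : ℕ) + 1 →
        g (restr (X i) (gapLen X j)) = restr (Y i) (gapLen Y j)) := by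
  obtain ⟨g, hg, hbij, hpre⟩ := exists_iso_of_prefix_iff
    (fun p : Fin n × Fin (n - 1) => restr (X p.1) (gapLen X p.2))
    (fun p => restr (Y p.1) (gapLen Y p.2))
    (fun p q => (node_prefix_iff hX _ _ _ _).trans (node_prefix_iff hY _ _ _ _).symm)
  refine ⟨g, ?_, ?_, fun j => ?_, fun i j _ => hg (i, j)⟩
  · rwa [Dhat_eq_range, Dhat_eq_range]
  · rwa [Dhat_eq_range]
  · rw [gapMeet_eq_restr, gapMeet_eq_restr]
    exact hg (gapIdx' j, j)
end
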